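/- arXiv:2401.17516 — 9 statements merged into one kernel-verified Lean document; each statement's English description precedes it below -/
import Mathlib

section
/- Let C be an abelian category with enough projectives and injectives, let X ⊆ C be an (n+2)-rigid precovering subcategory (i.e. Ext^i(X, X') = 0 for all X, X' ∈ X and 1 ≤ i ≤ n+1), and suppose every projective object P of C satisfies Ext^{≤ n+1}(X, P) = 0. If 0 → A → Y → C' → 0 is a short exact sequence where Y → C' is a right add(X ∪ Proj(C))-approximation of C' and Ext^i(X, C') = 0 for all X ∈ X and 1 ≤ i ≤ n, then Ext^i(X, A) = 0 for all X ∈ X and 1 ≤ i ≤ n+1. -/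
open CategoryTheory CategoryTheory.Limits CategoryTheory.Abelian

universe w v u

variable {C : Type u} [Category.{v} C] [Abelian C] [HasExt.{w} C]

/-- The right orthogonal `X^{⊥_{≤ m}}`: objects `N` with `Ext^i(A, N) = 0` for all
`A ∈ X` and `1 ≤ i ≤ m`. -/
def rightPerpLE (X : Set C) (m : ℕ) : Set C :=
  {N | ∀ A ∈ X, ∀ i : ℕ, 1 ≤ i → i ≤ m → Subsingleton (Abelian.Ext A N i)}

/-- The left orthogonal `^{⊥_{≤ m}}X`. -/
def leftPerpLE (X : Set C) (m : ℕ) : Set C :=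
  {M | ∀ A ∈ X, ∀ i : ℕ, 1 ≤ i → i ≤ m → Subsingleton (Abelian.Ext M A i)}

/-- `X` is `m+1`-rigid: `Ext^i(X, X') = 0` for all `X, X' ∈ X`, `1 ≤ i ≤ m`. -/
def IsRigidLE (X : Set C) (m : ℕ) : Prop :=
  ∀ A ∈ X, ∀ B ∈ X, ∀ i : ℕ, 1 ≤ i → i ≤ m → Subsingleton (Abelian.Ext A B i)

/-- `g : A ⟶ M` is a right `X`-approximation (an `X`-precover) of `M`. -/
def IsPrecover (X : Set C) {A M : C} (g : A ⟶ M) : Prop :=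
  A ∈ X ∧ ∀ A' ∈ X, ∀ h : A' ⟶ M, ∃ t : A' ⟶ A, t ≫ g = h

/-- `f : M ⟶ A` is a left `X`-approximation (an `X`-preenvelope) of `M`. -/
def IsPreenvelope (X : Set C) {A M : C} (f : M ⟶ A) : Prop :=
  A ∈ X ∧ ∀ A' ∈ X, ∀ h : M ⟶ A', ∃ t : A ⟶ A', f ≫ t = h

/-- `X` is precovering in the full subcategory `D`. -/
def IsPrecoveringIn (D X : Set C) : Prop :=
  ∀ M ∈ D, ∃ (A : C) (g : A ⟶ M), IsPrecover X g

/-- `X` is preenveloping in the full subcategory `D`. -/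
def IsPreenvelopingIn (D X : Set C) : Prop :=
  ∀ M ∈ D, ∃ (A : C) (f : M ⟶ A), IsPreenvelope X f

/-- `addClosure S` is the closure of `S` under finite direct sums and direct summands. -/
inductive addClosure (S : Set C) : C → Prop
  | of {A : C} (h : A ∈ S) : addClosure S A
  | zero (O : C) (h : IsZero O) : addClosure S O
  | biprod {A B : C} : addClosure S A → addClosure S B → addClosure S (A ⊞ B)
  | retract {A B : C} (i : A ⟶ B) (r : B ⟶ A) (hir : i ≫ r = 𝟙 A) :
      addClosure S B → addClosure S A

/-- The class of projective objects of `C`, as a set. -/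
def projSet : Set C := {P | Projective P}

/-- The class of injective objects of `C`, as a set. -/
def injSet : Set C := {I | Injective I}

/-- The projective objects of an extension-closed subcategory `R` (with the exact structure
inherited from `C`): objects `P ∈ R` with `Ext^1(P, N) = 0` (computed in `C`) for all `N ∈ R`. -/
def projIn (R : Set C) : Set C :=
  {P | P ∈ R ∧ ∀ N ∈ R, Subsingleton (Abelian.Ext P N 1)}

/-- The injective objects of an extension-closed subcategory `R`. -/
def injIn (R : Set C) : Set C :=
  {I | I ∈ R ∧ ∀ N ∈ R, Subsingleton (Abelian.Ext N I 1)}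

lemma addClosure_ext_subsingleton {S : Set C} {D : C} {i : ℕ}
    (hS : ∀ B ∈ S, Subsingleton (Abelian.Ext D B i)) {Y : C} (hY : addClosure S Y) :
    Subsingleton (Abelian.Ext D Y i) := by
  induction hY with
  | of h => exact hS _ h
  | zero O h =>
    refine subsingleton_of_forall_eq 0 fun e => ?_
    rw [← Abelian.Ext.comp_mk₀_id e, h.eq_of_src (𝟙 O) 0, Abelian.Ext.mk₀_zero,
      Abelian.Ext.comp_zero]
  | @biprod A B _ _ hA hB =>
    refine subsingleton_of_forall_eq 0 fun e => ?_
    rw [← Abelian.Ext.comp_mk₀_id e, ← biprod.total, Abelian.Ext.mk₀_add,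
      Abelian.Ext.comp_add, ← Abelian.Ext.mk₀_comp_mk₀, ← Abelian.Ext.mk₀_comp_mk₀,
      ← Abelian.Ext.comp_assoc_of_second_deg_zero,
      ← Abelian.Ext.comp_assoc_of_second_deg_zero,
      Subsingleton.elim (e.comp (Abelian.Ext.mk₀ biprod.fst) (add_zero i)) 0,
      Subsingleton.elim (e.comp (Abelian.Ext.mk₀ biprod.snd) (add_zero i)) 0]
    simp
  | @retract A B j r hir _ hB =>
    refine subsingleton_of_forall_eq 0 fun e => ?_
    rw [← Abelian.Ext.comp_mk₀_id e, ← hir, ← Abelian.Ext.mk₀_comp_mk₀,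
      ← Abelian.Ext.comp_assoc_of_second_deg_zero,
      Subsingleton.elim (e.comp (Abelian.Ext.mk₀ j) (add_zero i)) 0]
    simp

/-- Lemma 2.6(2): if `X` is `(n+2)`-rigid and precovering with `Proj(C) ⊆ X^{⊥_{≤ n+1}}`,
and `0 ⟶ A ⟶ Y ⟶ C' ⟶ 0` is a short exact sequence where `Y ⟶ C'` is a right
`add(X ∪ Proj C)`-approximation of `C'` and `C' ∈ X^{⊥_{≤ n}}`, then `A ∈ X^{⊥_{≤ n+1}}`. -/
theorem stmt6 [EnoughProjectives C] [EnoughInjectives C] (X : Set C) (n : ℕ)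
    (hrigid : IsRigidLE X (n + 1))
    (hprec : IsPrecoveringIn (Set.univ : Set C) X)
    (hproj : ∀ P : C, Projective P → P ∈ rightPerpLE X (n + 1))
    {A Y Z : C} (f : A ⟶ Y) (g : Y ⟶ Z) (w : f ≫ g = 0)
    (hse : (ShortComplex.mk f g w).ShortExact)
    (happrox : IsPrecover (setOf (addClosure (X ∪ projSet))) g)
    (hZ : Z ∈ rightPerpLE X n) :
    A ∈ rightPerpLE X (n + 1) := by
  intro D hD i h1 hi
  have hY : Subsingleton (Abelian.Ext D Y i) := by
    refine addClosure_ext_subsingleton ?_ happrox.1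
    rintro B (hB | hB)
    · exact hrigid D hD B hB i h1 hi
    · exact hproj B hB D hD i h1 hi
  refine subsingleton_of_forall_eq 0 fun e => ?_
  obtain ⟨m, rfl⟩ : ∃ m, i = m + 1 := ⟨i - 1, by omega⟩
  obtain ⟨x, hx⟩ := Abelian.Ext.covariant_sequence_exact₁ D hse e (Subsingleton.elim _ _)
    (n₀ := m) rfl
  rcases Nat.eq_zero_or_pos m with rfl | hm
  · obtain ⟨h, rfl⟩ := (Abelian.Ext.mk₀_bijective D Z).2 x
    obtain ⟨t, rfl⟩ := happrox.2 D (addClosure.of (Or.inl hD)) h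
    rw [← hx, ← Abelian.Ext.mk₀_comp_mk₀, Abelian.Ext.comp_assoc_of_second_deg_zero]
    have := hse.comp_extClass
    dsimp at this
    rw [this]
    simp
  · have := hZ D hD m hm (by omega)
    rw [← hx, Subsingleton.elim x 0]
    simp
end

section
/- Let C be an abelian category with enough projectives and injectives and X ⊆ C an (n+2)-rigid precovering subcategory. Then Proj(C) ⊆ X^{⊥_{≤ n+1}} if and only if the class of projective objects of the exact category X^{⊥_{≤ n+1}} (with exact structure inherited from C) equals add(X ∪ Proj(C)). -/
open CategoryTheory CategoryTheory.Limits CategoryTheory.Abelian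

universe w v u

variable {C : Type u} [Category.{v} C] [Abelian C] [HasExt.{w} C]

lemma ext_sub_retract_left {A B : C} (i : A ⟶ B) (r : B ⟶ A) (hir : i ≫ r = 𝟙 A) (N : C) (k : ℕ)
    (h : Subsingleton (Abelian.Ext.{w} B N k)) : Subsingleton (Abelian.Ext.{w} A N k) := by
  refine ⟨fun x y => ?_⟩
  have e : ∀ z : Abelian.Ext.{w} A N k,
      (Ext.mk₀ i).comp ((Ext.mk₀ r).comp z (zero_add k)) (zero_add k) = z := by
    intro z
    rw [Ext.mk₀_comp_mk₀_assoc, hir, Ext.mk₀_id_comp]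
  rw [← e x, ← e y, Subsingleton.elim ((Ext.mk₀ r).comp x (zero_add k)) ((Ext.mk₀ r).comp y _)]

lemma ext_sub_retract_right {A B : C} (i : A ⟶ B) (r : B ⟶ A) (hir : i ≫ r = 𝟙 A) (M : C) (k : ℕ)
    (h : Subsingleton (Abelian.Ext.{w} M B k)) : Subsingleton (Abelian.Ext.{w} M A k) := by
  refine ⟨fun x y => ?_⟩
  have e : ∀ z : Abelian.Ext.{w} M A k,
      (z.comp (Ext.mk₀ i) (add_zero k)).comp (Ext.mk₀ r) (add_zero k) = z := by
    intro z
    rw [Ext.comp_assoc_of_third_deg_zero, Ext.mk₀_comp_mk₀, hir, Ext.comp_mk₀_id]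
  rw [← e x, ← e y, Subsingleton.elim (x.comp (Ext.mk₀ i) (add_zero k)) (y.comp (Ext.mk₀ i) _)]

lemma projIn_of_addClosure (X : Set C) (n : ℕ) (hrigid : IsRigidLE X (n + 1))
    (hP : projSet ⊆ rightPerpLE X (n + 1)) {P : C} (h : addClosure (X ∪ projSet) P) :
    P ∈ projIn (rightPerpLE X (n + 1)) := by
  induction h with
  | of h =>
    rcases h with h | h
    · exact ⟨fun A hA i h1 h2 => hrigid A hA _ h i h1 h2,
        fun N hN => hN _ h 1 le_rfl (by omega)⟩
    · refine ⟨hP h, fun N _ => ?_⟩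
      have : Projective _ := h
      exact Ext.subsingleton_of_projective _ N 0
  | zero O hO =>
    refine ⟨fun A hA i h1 h2 => ⟨fun x y => ?_⟩, fun N hN => ⟨fun x y => ?_⟩⟩
    · rw [← Ext.comp_mk₀_id x, ← Ext.comp_mk₀_id y, hO.eq_of_src (𝟙 O) 0]
      simp
    · rw [← Ext.mk₀_id_comp x, ← Ext.mk₀_id_comp y, hO.eq_of_src (𝟙 O) 0]
      simp
  | biprod _ _ ihA ihB =>
    refine ⟨fun A hA i h1 h2 => ?_, fun N hN => ?_⟩
    · have := ihA.1 A hA i h1 h2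
      have := ihB.1 A hA i h1 h2
      exact Ext.addEquivBiprod.toEquiv.subsingleton
    · have := ihA.2 N hN
      have := ihB.2 N hN
      exact Ext.biprodAddEquiv.toEquiv.subsingleton
  | retract i r hir _ ih =>
    exact ⟨fun A hA k h1 h2 => ext_sub_retract_right i r hir A k (ih.1 A hA k h1 h2),
      fun N hN => ext_sub_retract_left i r hir N 1 (ih.2 N hN)⟩

lemma addClosure_of_projIn [EnoughProjectives C] (X : Set C) (n : ℕ)
    (hrigid : IsRigidLE X (n + 1))
    (hprec : IsPrecoveringIn (Set.univ : Set C) X)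
    (hP : projSet ⊆ rightPerpLE X (n + 1)) {P : C} (h : P ∈ projIn (rightPerpLE X (n + 1))) :
    addClosure (X ∪ projSet) P := by
  obtain ⟨A, g, hA, hg⟩ := hprec P (Set.mem_univ _)
  have hQ : (Projective.over P) ∈ (projSet : Set C) := Projective.projective_over P
  have hM : addClosure (X ∪ projSet) (A ⊞ Projective.over P) :=
    .biprod (.of (Or.inl hA)) (.of (Or.inr hQ))
  have hM' := (projIn_of_addClosure X n hrigid hP hM).1
  let p : A ⊞ Projective.over P ⟶ P := biprod.desc g (Projective.π P)
  have hp : Epi p := by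
    have : Epi (biprod.inr ≫ p) := by
      simp only [p, biprod.inr_desc]; infer_instance
    exact epi_of_epi biprod.inr p
  let S := ShortComplex.mk (kernel.ι p) p (kernel.condition p)
  have hS : S.ShortExact :=
    { exact := ShortComplex.exact_of_f_is_kernel _ (kernelIsKernel p)
      mono_f := inferInstanceAs (Mono (kernel.ι p))
      epi_g := hp }
  have hK : S.X₁ ∈ rightPerpLE X (n + 1) := by
    intro B hB i h1 h2
    suffices H : ∀ x : Ext.{w} B S.X₁ i, x = 0 from ⟨fun x y => (H x).trans (H y).symm⟩
    intro x
    have s2 : Subsingleton (Ext.{w} B S.X₂ i) := hM' B hB i h1 h2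
    obtain ⟨j, rfl⟩ : ∃ j, i = j + 1 := ⟨i - 1, by omega⟩
    obtain ⟨y, rfl⟩ := Ext.covariant_sequence_exact₁ B hS x (Subsingleton.elim _ _) rfl
    obtain rfl | hj := Nat.eq_zero_or_pos j
    · obtain ⟨f, rfl⟩ := (Ext.mk₀_bijective B S.X₃).2 y
      obtain ⟨t, rfl⟩ := hg B hB f
      have e : t ≫ g = (t ≫ biprod.inl) ≫ S.g := by simp [S, p]
      rw [e, ← Ext.mk₀_comp_mk₀, Ext.comp_assoc_of_second_deg_zero, hS.comp_extClass,
        Ext.comp_zero]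
    · have s3 : Subsingleton (Ext.{w} B S.X₃ j) := h.1 B hB j hj (by omega)
      rw [Subsingleton.elim y 0, Ext.zero_comp]
  have sP : Subsingleton (Ext.{w} P S.X₁ 1) := h.2 _ hK
  obtain ⟨x, hx⟩ := Ext.covariant_sequence_exact₃ P hS (Ext.mk₀ (𝟙 P)) (zero_add 1)
    (Subsingleton.elim _ _)
  obtain ⟨s, rfl⟩ := (Ext.mk₀_bijective P S.X₂).2 x
  rw [Ext.mk₀_comp_mk₀] at hx
  exact .retract s p ((Ext.mk₀_bijective P P).1 hx) hM

/-- Proposition 2.7: for an `(n+2)`-rigid precovering subcategory `X` of `C`,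
`Proj(C) ⊆ X^{⊥_{≤ n+1}}` if and only if the projective objects of the exact category
`X^{⊥_{≤ n+1}}` are exactly `add(X ∪ Proj C)`. -/
theorem stmt7 [EnoughProjectives C] [EnoughInjectives C] (X : Set C) (n : ℕ)
    (hrigid : IsRigidLE X (n + 1))
    (hprec : IsPrecoveringIn (Set.univ : Set C) X) :
    projSet ⊆ rightPerpLE X (n + 1) ↔
      projIn (rightPerpLE X (n + 1)) = setOf (addClosure (X ∪ projSet)) := by
  constructor
  · intro hP
    ext P
    exact ⟨fun h => addClosure_of_projIn X n hrigid hprec hP h,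
      fun h => projIn_of_addClosure X n hrigid hP h⟩
  · intro h P hP
    have : P ∈ setOf (addClosure (X ∪ projSet)) := addClosure.of (Or.inr hP)
    rw [← h] at this
    exact this.1
end

section
/- Let C be an abelian category with enough projectives and injectives and X ⊆ C an (n+2)-rigid precovering subcategory with Proj(C) ⊆ X^{⊥_{≤ n+1}}. Then the exact category X^{⊥_{≤ n+1}} has enough projectives, and its projective objects are exactly add(X ∪ Proj(C)). -/
open CategoryTheory CategoryTheory.Limits CategoryTheory.Abelian

universe w v u

variable {C : Type u} [Category.{v} C] [Abelian C] [HasExt.{w} C]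

namespace Stmt8Aux

lemma sub_biprod_left {A B N : C} {i : ℕ} (hA : Subsingleton (Ext A N i))
    (hB : Subsingleton (Ext B N i)) : Subsingleton (Ext (A ⊞ B) N i) :=
  Ext.biprodAddEquiv.toEquiv.subsingleton

lemma sub_biprod_right {A B N : C} {i : ℕ} (hA : Subsingleton (Ext N A i))
    (hB : Subsingleton (Ext N B i)) : Subsingleton (Ext N (A ⊞ B) i) := by
  refine subsingleton_of_forall_eq 0 fun e => ?_
  have h : e = (e.comp (Ext.mk₀ biprod.fst) (add_zero i)).comp (Ext.mk₀ biprod.inl) (add_zero i) +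
      (e.comp (Ext.mk₀ biprod.snd) (add_zero i)).comp (Ext.mk₀ biprod.inr) (add_zero i) := by
    simp only [Ext.comp_assoc_of_third_deg_zero, Ext.mk₀_comp_mk₀, ← Ext.comp_add, ← Ext.mk₀_add,
      biprod.total, Ext.comp_mk₀_id]
  rw [h, Subsingleton.elim (e.comp (Ext.mk₀ biprod.fst) (add_zero i)) 0,
    Subsingleton.elim (e.comp (Ext.mk₀ biprod.snd) (add_zero i)) 0]
  simp

lemma sub_retract_left {A B N : C} {j : ℕ} (i : A ⟶ B) (r : B ⟶ A) (hir : i ≫ r = 𝟙 A)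
    (hB : Subsingleton (Ext B N j)) : Subsingleton (Ext A N j) := by
  refine subsingleton_of_forall_eq 0 fun e => ?_
  rw [← Ext.mk₀_id_comp e, ← hir, ← Ext.mk₀_comp_mk₀_assoc,
    Subsingleton.elim ((Ext.mk₀ r).comp e (zero_add j)) 0, Ext.comp_zero]

lemma sub_retract_right {A B N : C} {j : ℕ} (i : A ⟶ B) (r : B ⟶ A) (hir : i ≫ r = 𝟙 A)
    (hB : Subsingleton (Ext N B j)) : Subsingleton (Ext N A j) := by
  refine subsingleton_of_forall_eq 0 fun e => ?_
  rw [← Ext.comp_mk₀_id e, ← hir, ← Ext.mk₀_comp_mk₀, ← Ext.comp_assoc_of_third_deg_zero,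
    Subsingleton.elim (e.comp (Ext.mk₀ i) (add_zero j)) 0, Ext.zero_comp]

lemma mem_projIn_of_add (X : Set C) (n : ℕ) (hrigid : IsRigidLE X (n + 1))
    (hproj : projSet ⊆ rightPerpLE X (n + 1)) {P : C} (h : addClosure (X ∪ projSet) P) :
    P ∈ projIn (rightPerpLE X (n + 1)) := by
  induction h with
  | of h =>
    rcases h with h | h
    · exact ⟨fun A hA i h1 h2 => hrigid A hA _ h i h1 h2,
        fun N hN => hN _ h 1 le_rfl (by omega)⟩
    · have : Projective _ := h
      exact ⟨hproj h, fun N _ => subsingleton_of_forall_eq 0 Ext.eq_zero_of_projective⟩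
  | zero O hO =>
    have h0 : 𝟙 O = 0 := hO.eq_of_src _ _
    refine ⟨fun A hA i h1 h2 => subsingleton_of_forall_eq 0 fun e => ?_,
      fun N hN => subsingleton_of_forall_eq 0 fun e => ?_⟩
    · rw [← Ext.comp_mk₀_id e, h0, Ext.mk₀_zero, Ext.comp_zero]
    · rw [← Ext.mk₀_id_comp e, h0, Ext.mk₀_zero, Ext.zero_comp]
  | biprod _ _ ha hb =>
    exact ⟨fun A hA i h1 h2 => sub_biprod_right (ha.1 A hA i h1 h2) (hb.1 A hA i h1 h2),
      fun N hN => sub_biprod_left (ha.2 N hN) (hb.2 N hN)⟩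
  | retract i r hir _ hb =>
    exact ⟨fun A hA j h1 h2 => sub_retract_right i r hir (hb.1 A hA j h1 h2),
      fun N hN => sub_retract_left i r hir (hb.2 N hN)⟩

lemma exists_conflation [EnoughProjectives C] (X : Set C) (n : ℕ)
    (hrigid : IsRigidLE X (n + 1))
    (hprec : IsPrecoveringIn (Set.univ : Set C) X)
    (hproj : projSet ⊆ rightPerpLE X (n + 1)) (N : C) (hN : N ∈ rightPerpLE X (n + 1)) :
    ∃ (A P : C) (i : A ⟶ P) (p : P ⟶ N) (w : i ≫ p = 0),
        (ShortComplex.mk i p w).ShortExact ∧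
        A ∈ rightPerpLE X (n + 1) ∧ addClosure (X ∪ projSet) P := by
  obtain ⟨A₀, g, hA₀, hg⟩ := hprec N trivial
  have hP : addClosure (X ∪ projSet) (A₀ ⊞ Projective.over N) :=
    .biprod (.of (Or.inl hA₀)) (.of (Or.inr (inferInstanceAs (Projective (Projective.over N)))))
  have hP' := (mem_projIn_of_add X n hrigid hproj hP).1
  let p : A₀ ⊞ Projective.over N ⟶ N := biprod.desc g (Projective.π N)
  have hepi : Epi p := by
    have h : Epi (biprod.inr ≫ p) := by
      simp only [p, biprod.inr_desc]; infer_instance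
    exact epi_of_epi biprod.inr p
  have hS : (ShortComplex.mk (kernel.ι p) p (kernel.condition p)).ShortExact :=
    { exact := ShortComplex.exact_of_f_is_kernel _ (kernelIsKernel p)
      mono_f := inferInstanceAs (Mono (kernel.ι p))
      epi_g := hepi }
  refine ⟨kernel p, _, kernel.ι p, p, kernel.condition p, hS, ?_, hP⟩
  intro A hA i h1 h2
  refine subsingleton_of_forall_eq 0 fun e => ?_
  have := hP' A hA i h1 h2
  obtain ⟨j, rfl⟩ : ∃ j, i = j + 1 := ⟨i - 1, by omega⟩
  obtain ⟨y, rfl⟩ := Ext.covariant_sequence_exact₁ A hS e (Subsingleton.elim _ _) rfl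
  rcases j with _ | j
  · obtain ⟨f, rfl⟩ := (Ext.mk₀_bijective _ _).2 y
    obtain ⟨t, ht⟩ := hg A hA f
    have hf : f = (t ≫ biprod.inl) ≫ p := by simp [p, ht]
    have h3 : (Ext.mk₀ p).comp hS.extClass (zero_add 1) = 0 := hS.comp_extClass
    rw [hf, ← Ext.mk₀_comp_mk₀, Ext.comp_assoc_of_second_deg_zero, h3, Ext.comp_zero]
  · have := hN A hA (j + 1) (by omega) (by omega)
    have h4 : y = 0 := Subsingleton.elim (α := Ext A N (j + 1)) _ _
    rw [h4, Ext.zero_comp]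

end Stmt8Aux

/-- Proposition 2.10: for an `(n+2)`-rigid precovering subcategory `X` of `C` with
`Proj(C) ⊆ X^{⊥_{≤ n+1}}`, the exact category `X^{⊥_{≤ n+1}}` has enough projectives, and
its projective objects are exactly `add(X ∪ Proj C)`. -/
theorem stmt8 [EnoughProjectives C] [EnoughInjectives C] (X : Set C) (n : ℕ)
    (hrigid : IsRigidLE X (n + 1))
    (hprec : IsPrecoveringIn (Set.univ : Set C) X)
    (hproj : projSet ⊆ rightPerpLE X (n + 1)) :
    (∀ N ∈ rightPerpLE X (n + 1),
      ∃ (A P : C) (i : A ⟶ P) (p : P ⟶ N) (w : i ≫ p = 0),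
        (ShortComplex.mk i p w).ShortExact ∧
        A ∈ rightPerpLE X (n + 1) ∧ P ∈ projIn (rightPerpLE X (n + 1))) ∧
    projIn (rightPerpLE X (n + 1)) = setOf (addClosure (X ∪ projSet)) := by
  refine ⟨fun N hN => ?_, Set.Subset.antisymm (fun P hP => ?_) fun P hP => ?_⟩
  · obtain ⟨A, P, i, p, w, hS, hA, hP⟩ :=
      Stmt8Aux.exists_conflation X n hrigid hprec hproj N hN
    exact ⟨A, P, i, p, w, hS, hA, Stmt8Aux.mem_projIn_of_add X n hrigid hproj hP⟩
  · obtain ⟨A, Q, i, p, w, hS, hA, hQ⟩ :=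
      Stmt8Aux.exists_conflation X n hrigid hprec hproj P hP.1
    have := hP.2 A hA
    obtain ⟨x, hx⟩ := Ext.covariant_sequence_exact₃ P hS (Ext.mk₀ (𝟙 P)) (zero_add 1)
      (Subsingleton.elim (α := Ext P A 1) _ _)
    obtain ⟨s, rfl⟩ := (Ext.mk₀_bijective _ _).2 x
    rw [Ext.mk₀_comp_mk₀] at hx
    exact .retract s p ((Ext.mk₀_bijective _ _).1 hx) hQ
  · exact Stmt8Aux.mem_projIn_of_add X n hrigid hproj hP
end

section
/- Let C be an abelian category with enough projectives and injectives and X ⊆ C an (n+2)-rigid preenveloping subcategory with Inj(C) ⊆ ^{⊥_{≤ n+1}}X. Then Inj(C) ⊆ ^{⊥_{≤ n+1}}X holds if and only if the injective objects of the exact category ^{⊥_{≤ n+1}}X are exactly add(X ∪ Inj(C)). -/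
open CategoryTheory CategoryTheory.Limits CategoryTheory.Abelian

universe w v u

variable {C : Type u} [Category.{v} C] [Abelian C] [HasExt.{w} C]

lemma ext_left_retract {A B Y : C} {k : ℕ} (i : A ⟶ B) (r : B ⟶ A) (hir : i ≫ r = 𝟙 A)
    (h : Subsingleton (Abelian.Ext B Y k)) : Subsingleton (Abelian.Ext A Y k) := by
  refine subsingleton_of_forall_eq 0 fun x => ?_
  rw [← Ext.mk₀_id_comp x, ← hir, ← Ext.mk₀_comp_mk₀_assoc,
    Subsingleton.elim ((Ext.mk₀ r).comp x (zero_add k)) 0, Ext.comp_zero]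

lemma ext_right_retract {A B Y : C} {k : ℕ} (i : A ⟶ B) (r : B ⟶ A) (hir : i ≫ r = 𝟙 A)
    (h : Subsingleton (Abelian.Ext Y B k)) : Subsingleton (Abelian.Ext Y A k) := by
  refine subsingleton_of_forall_eq 0 fun x => ?_
  rw [← Ext.comp_mk₀_id x, ← hir, ← Ext.mk₀_comp_mk₀, ← Ext.comp_assoc_of_third_deg_zero,
    Subsingleton.elim (x.comp (Ext.mk₀ i) (add_zero k)) 0, Ext.zero_comp]

lemma ext_left_biprod {A B Y : C} {k : ℕ} (hA : Subsingleton (Abelian.Ext A Y k))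
    (hB : Subsingleton (Abelian.Ext B Y k)) : Subsingleton (Abelian.Ext (A ⊞ B) Y k) :=
  ⟨fun _ _ => Ext.biprod_ext (Subsingleton.elim _ _) (Subsingleton.elim _ _)⟩

lemma ext_right_biprod {A B Y : C} {k : ℕ} (hA : Subsingleton (Abelian.Ext Y A k))
    (hB : Subsingleton (Abelian.Ext Y B k)) : Subsingleton (Abelian.Ext Y (A ⊞ B) k) := by
  refine subsingleton_of_forall_eq 0 fun x => ?_
  rw [← Ext.comp_mk₀_id x, ← biprod.total, Ext.mk₀_add, Ext.comp_add,
    ← Ext.mk₀_comp_mk₀, ← Ext.mk₀_comp_mk₀,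
    ← Ext.comp_assoc_of_third_deg_zero, ← Ext.comp_assoc_of_third_deg_zero,
    Subsingleton.elim (x.comp (Ext.mk₀ biprod.fst) (add_zero k)) 0,
    Subsingleton.elim (x.comp (Ext.mk₀ biprod.snd) (add_zero k)) 0, Ext.zero_comp,
    Ext.zero_comp, add_zero]

lemma ext_left_zero {O Y : C} {k : ℕ} (h : IsZero O) : Subsingleton (Abelian.Ext O Y k) := by
  refine subsingleton_of_forall_eq 0 fun x => ?_
  rw [← Ext.mk₀_id_comp x, h.eq_of_src (𝟙 O) 0, Ext.mk₀_zero, Ext.zero_comp]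

lemma ext_right_zero {O Y : C} {k : ℕ} (h : IsZero O) : Subsingleton (Abelian.Ext Y O k) := by
  refine subsingleton_of_forall_eq 0 fun x => ?_
  rw [← Ext.comp_mk₀_id x, h.eq_of_src (𝟙 O) 0, Ext.mk₀_zero, Ext.comp_zero]

lemma ext_inj {I Y : C} (hI : Injective I) : Subsingleton (Abelian.Ext Y I 1) :=
  subsingleton_of_forall_eq 0 Ext.eq_zero_of_injective

lemma addClosure_sub (X : Set C) (n : ℕ) (hrigid : IsRigidLE X (n + 1))
    (hinj : injSet ⊆ leftPerpLE X (n + 1)) {M : C} (hM : addClosure (X ∪ injSet) M) :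
    M ∈ injIn (leftPerpLE X (n + 1)) := by
  induction hM with
  | of h =>
    rcases h with h | h
    · exact ⟨fun B hB i h1 h2 => hrigid _ h B hB i h1 h2,
        fun N hN => hN _ h 1 le_rfl (by omega)⟩
    · exact ⟨hinj h, fun N _ => ext_inj h⟩
  | zero O h => exact ⟨fun B _ i _ _ => ext_left_zero h, fun N _ => ext_right_zero h⟩
  | biprod _ _ ihA ihB =>
    exact ⟨fun B hB i h1 h2 => ext_left_biprod (ihA.1 B hB i h1 h2) (ihB.1 B hB i h1 h2),
      fun N hN => ext_right_biprod (ihA.2 N hN) (ihB.2 N hN)⟩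
  | retract i r hir _ ih =>
    exact ⟨fun B hB k h1 h2 => ext_left_retract i r hir (ih.1 B hB k h1 h2),
      fun N hN => ext_right_retract i r hir (ih.2 N hN)⟩

lemma sub_addClosure [EnoughInjectives C] (X : Set C) (n : ℕ)
    (hrigid : IsRigidLE X (n + 1))
    (hpreenv : IsPreenvelopingIn (Set.univ : Set C) X)
    (hinj : injSet ⊆ leftPerpLE X (n + 1)) {M : C}
    (hM : M ∈ injIn (leftPerpLE X (n + 1))) : addClosure (X ∪ injSet) M := by
  obtain ⟨A, f, hA, hf⟩ := hpreenv M (Set.mem_univ _)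
  have hJ : Injective (Injective.under M) := inferInstance
  let g : M ⟶ A ⊞ Injective.under M := biprod.lift f (Injective.ι M)
  have hgm : g ≫ biprod.snd = Injective.ι M := biprod.lift_snd _ _
  have : Mono (g ≫ biprod.snd) := by rw [hgm]; infer_instance
  have : Mono g := mono_of_mono g biprod.snd
  have hadd : addClosure (X ∪ injSet) (A ⊞ Injective.under M) :=
    .biprod (.of (Or.inl hA)) (.of (Or.inr hJ))
  have hR := (addClosure_sub X n hrigid hinj hadd).1
  let S : ShortComplex C := ShortComplex.mk g (cokernel.π g) (cokernel.condition g)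
  have hS : S.ShortExact :=
    { exact := ShortComplex.exact_of_g_is_cokernel S (cokernelIsCokernel g)
      mono_f := ‹Mono g›
      epi_g := (inferInstance : Epi (cokernel.π g)) }
  have hK : cokernel g ∈ leftPerpLE X (n + 1) := by
    intro B hB i h1 h2
    refine subsingleton_of_forall_eq 0 fun x => ?_
    have hs := hR B hB i h1 h2
    obtain ⟨k, rfl⟩ : ∃ k, i = 1 + k := ⟨i - 1, by omega⟩
    obtain ⟨y, rfl⟩ := Ext.contravariant_sequence_exact₃ hS B x (hs.elim _ _) rfl
    rcases Nat.eq_zero_or_pos k with rfl | hk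
    · obtain ⟨φ, rfl⟩ := (Ext.mk₀_bijective _ _).2 y
      obtain ⟨t, ht⟩ := hf B hB φ
      have e : φ = S.f ≫ (biprod.fst ≫ t : A ⊞ Injective.under M ⟶ B) := by
        rw [← ht]
        simp [S, g]
      rw [e, ← Ext.mk₀_comp_mk₀, hS.extClass_comp_assoc]
    · have := hM.1 B hB k hk (by omega)
      rw [this.elim y 0, Ext.comp_zero]
  have h1 := hM.2 _ hK
  obtain ⟨y, hy⟩ := Ext.contravariant_sequence_exact₁ hS M (Ext.mk₀ (𝟙 M)) (add_zero 1)
    (h1.elim _ _)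
  obtain ⟨r, rfl⟩ := (Ext.mk₀_bijective _ _).2 y
  rw [Ext.mk₀_comp_mk₀] at hy
  exact .retract g r ((Ext.mk₀_bijective _ _).1 hy) hadd

/-- Proposition 2.12: for an `(n+2)`-rigid preenveloping subcategory `X` of `C` with
`Inj(C) ⊆ ^{⊥_{≤ n+1}}X`, the condition `Inj(C) ⊆ ^{⊥_{≤ n+1}}X` holds if and only if
the injective objects of the exact category `^{⊥_{≤ n+1}}X` are exactly `add(X ∪ Inj C)`. -/
theorem stmt9 [EnoughProjectives C] [EnoughInjectives C] (X : Set C) (n : ℕ)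
    (hrigid : IsRigidLE X (n + 1))
    (hpreenv : IsPreenvelopingIn (Set.univ : Set C) X)
    (hinj : injSet ⊆ leftPerpLE X (n + 1)) :
    injSet ⊆ leftPerpLE X (n + 1) ↔
      injIn (leftPerpLE X (n + 1)) = setOf (addClosure (X ∪ injSet)) := by
  exact ⟨fun _ => Set.ext fun M => ⟨sub_addClosure X n hrigid hpreenv hinj,
    addClosure_sub X n hrigid hinj⟩, fun _ => hinj⟩
end

section
/- Let C be an abelian category with enough projectives and injectives, X ⊆ C an (n+2)-rigid functorially finite subcategory satisfying X^{⊥_{≤ n+1}} = ^{⊥_{≤ n+1}}X. Then the reduction R = X^{⊥_{≤ n+1}} is an exact category with enough projectives and enough injectives, given respectively by add(X ∪ Proj(C)) and add(X ∪ Inj(C)). -/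
open CategoryTheory CategoryTheory.Limits CategoryTheory.Abelian

universe w v u

variable {C : Type u} [Category.{v} C] [Abelian C] [HasExt.{w} C]

section Helpers

theorem hlp_sub {A B : C} {i : ℕ} (h : ∀ x : Abelian.Ext A B i, x = 0) :
    Subsingleton (Abelian.Ext A B i) :=
  ⟨fun a b => (h a).trans (h b).symm⟩

theorem hlp_cov2 {S : ShortComplex C} (hS : S.ShortExact) (A : C) (i : ℕ)
    (h1 : Subsingleton (Abelian.Ext A S.X₁ i)) (h3 : Subsingleton (Abelian.Ext A S.X₃ i)) :
    Subsingleton (Abelian.Ext A S.X₂ i) := by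
  refine hlp_sub fun x => ?_
  obtain ⟨y, rfl⟩ := Abelian.Ext.covariant_sequence_exact₂ A hS x (Subsingleton.elim _ _)
  rw [Subsingleton.elim y 0, Abelian.Ext.zero_comp]

theorem hlp_con2 {S : ShortComplex C} (hS : S.ShortExact) (A : C) (i : ℕ)
    (h1 : Subsingleton (Abelian.Ext S.X₁ A i)) (h3 : Subsingleton (Abelian.Ext S.X₃ A i)) :
    Subsingleton (Abelian.Ext S.X₂ A i) := by
  refine hlp_sub fun x => ?_
  obtain ⟨y, rfl⟩ := Abelian.Ext.contravariant_sequence_exact₂ hS A x (Subsingleton.elim _ _)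
  rw [Subsingleton.elim y 0, Abelian.Ext.comp_zero]

theorem hlp_retR {A B Z : C} (i : A ⟶ B) (r : B ⟶ A) (hir : i ≫ r = 𝟙 A) (k : ℕ)
    (h : Subsingleton (Abelian.Ext Z B k)) : Subsingleton (Abelian.Ext Z A k) := by
  refine hlp_sub fun x => ?_
  rw [← Abelian.Ext.comp_mk₀_id x, ← hir, ← Abelian.Ext.mk₀_comp_mk₀,
    ← Abelian.Ext.comp_assoc_of_third_deg_zero,
    Subsingleton.elim (x.comp (Abelian.Ext.mk₀ i) (add_zero k)) 0, Abelian.Ext.zero_comp]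

theorem hlp_retL {A B Z : C} (i : A ⟶ B) (r : B ⟶ A) (hir : i ≫ r = 𝟙 A) (k : ℕ)
    (h : Subsingleton (Abelian.Ext B Z k)) : Subsingleton (Abelian.Ext A Z k) := by
  refine hlp_sub fun x => ?_
  rw [← Abelian.Ext.mk₀_id_comp x, ← hir, ← Abelian.Ext.mk₀_comp_mk₀_assoc,
    Subsingleton.elim ((Abelian.Ext.mk₀ r).comp x (zero_add k)) 0, Abelian.Ext.comp_zero]

theorem hlp_zeroR {Z O : C} (h : IsZero O) (k : ℕ) : Subsingleton (Abelian.Ext Z O k) := by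
  refine hlp_sub fun x => ?_
  rw [← Abelian.Ext.comp_mk₀_id x, h.eq_of_src (𝟙 O) 0, Abelian.Ext.mk₀_zero,
    Abelian.Ext.comp_zero]

theorem hlp_zeroL {Z O : C} (h : IsZero O) (k : ℕ) : Subsingleton (Abelian.Ext O Z k) := by
  refine hlp_sub fun x => ?_
  rw [← Abelian.Ext.mk₀_id_comp x, h.eq_of_src (𝟙 O) 0, Abelian.Ext.mk₀_zero,
    Abelian.Ext.zero_comp]

theorem hlp_biprod (A B : C) :
    (ShortComplex.mk (biprod.inl : A ⟶ A ⊞ B) biprod.snd (by simp)).ShortExact :=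
  (ShortComplex.Splitting.ofHasBinaryBiproduct A B).shortExact

theorem hlp_biprodR {Z A B : C} (k : ℕ) (hA : Subsingleton (Abelian.Ext Z A k))
    (hB : Subsingleton (Abelian.Ext Z B k)) : Subsingleton (Abelian.Ext Z (A ⊞ B) k) :=
  hlp_cov2 (hlp_biprod A B) Z k hA hB

theorem hlp_biprodL {Z A B : C} (k : ℕ) (hA : Subsingleton (Abelian.Ext A Z k))
    (hB : Subsingleton (Abelian.Ext B Z k)) : Subsingleton (Abelian.Ext (A ⊞ B) Z k) :=
  hlp_con2 (hlp_biprod A B) Z k hA hB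

theorem hlp_proj {P : C} (hP : Projective P) (Z : C) (k : ℕ) (hk : 1 ≤ k) :
    Subsingleton (Abelian.Ext P Z k) := by
  obtain ⟨j, rfl⟩ := Nat.exists_eq_add_of_le' hk
  exact hlp_sub fun x => Abelian.Ext.eq_zero_of_projective x

theorem hlp_inj {I : C} (hI : Injective I) (Z : C) (k : ℕ) (hk : 1 ≤ k) :
    Subsingleton (Abelian.Ext Z I k) := by
  obtain ⟨j, rfl⟩ := Nat.exists_eq_add_of_le' hk
  exact hlp_sub fun x => Abelian.Ext.eq_zero_of_injective x

/-- `add S` is contained in the projectives of a right orthogonal once `S` is. -/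
theorem hlp_addProj (X S : Set C) (m : ℕ) (hS : S ⊆ projIn (rightPerpLE X m)) {P : C}
    (hP : addClosure S P) : P ∈ projIn (rightPerpLE X m) := by
  induction hP with
  | of h => exact hS h
  | zero O h => exact ⟨fun _ _ _ _ _ => hlp_zeroR h _, fun _ _ => hlp_zeroL h _⟩
  | biprod _ _ h1 h2 =>
    exact ⟨fun A hA i h h' => hlp_biprodR i (h1.1 A hA i h h') (h2.1 A hA i h h'),
      fun N hN => hlp_biprodL 1 (h1.2 N hN) (h2.2 N hN)⟩
  | retract i r hir _ h =>
    exact ⟨fun A hA k hk hk' => hlp_retR i r hir k (h.1 A hA k hk hk'),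
      fun N hN => hlp_retL i r hir 1 (h.2 N hN)⟩

theorem hlp_addInj (X S : Set C) (m : ℕ) (hS : S ⊆ injIn (leftPerpLE X m)) {P : C}
    (hP : addClosure S P) : P ∈ injIn (leftPerpLE X m) := by
  induction hP with
  | of h => exact hS h
  | zero O h => exact ⟨fun _ _ _ _ _ => hlp_zeroL h _, fun _ _ => hlp_zeroR h _⟩
  | biprod _ _ h1 h2 =>
    exact ⟨fun A hA i h h' => hlp_biprodL i (h1.1 A hA i h h') (h2.1 A hA i h h'),
      fun N hN => hlp_biprodR 1 (h1.2 N hN) (h2.2 N hN)⟩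
  | retract i r hir _ h =>
    exact ⟨fun A hA k hk hk' => hlp_retL i r hir k (h.1 A hA k hk hk'),
      fun N hN => hlp_retR i r hir 1 (h.2 N hN)⟩

theorem hlp_enoughProj [EnoughProjectives C] (X : Set C) (m : ℕ)
    (hX : X ∪ projSet ⊆ projIn (rightPerpLE X m))
    (hprec : IsPrecoveringIn (Set.univ : Set C) X) (N : C) (hN : N ∈ rightPerpLE X m) :
    ∃ (A P : C) (i : A ⟶ P) (p : P ⟶ N) (w : i ≫ p = 0),
        (ShortComplex.mk i p w).ShortExact ∧
        A ∈ rightPerpLE X m ∧ addClosure (X ∪ projSet) P := by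
  obtain ⟨A, g, hA, hg⟩ := hprec N trivial
  let p : A ⊞ Projective.over N ⟶ N := biprod.desc g (Projective.π N)
  have hp : Epi p := by
    have : Epi (biprod.inr ≫ p) := by
      rw [biprod.inr_desc]; infer_instance
    exact epi_of_epi biprod.inr p
  have hse : (ShortComplex.mk (kernel.ι p) p (kernel.condition p)).ShortExact :=
    { exact := ShortComplex.exact_of_f_is_kernel _ (kernelIsKernel p) }
  have hadd : addClosure (X ∪ projSet) (A ⊞ Projective.over N) :=
    .biprod (.of (Or.inl hA)) (.of (Or.inr (Projective.projective_over N)))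
  refine ⟨kernel p, _, kernel.ι p, p, kernel.condition p, hse, ?_, hadd⟩
  have hmem := (hlp_addProj X _ m hX hadd).1
  intro B hB i hi him
  refine hlp_sub fun x => ?_
  have := hmem B hB i hi him
  obtain ⟨j, rfl⟩ := Nat.exists_eq_add_of_le' hi
  obtain ⟨y, rfl⟩ := Abelian.Ext.covariant_sequence_exact₁ B hse x
    (Subsingleton.elim (α := Abelian.Ext B (A ⊞ Projective.over N) (j + 1)) _ _) rfl
  rcases Nat.eq_zero_or_pos j with rfl | hj
  · obtain ⟨f, rfl⟩ := (Abelian.Ext.mk₀_bijective _ _).2 y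
    obtain ⟨t, ht⟩ := hg B hB f
    have hf : f = (t ≫ biprod.inl) ≫ p := by
      simp only [p, Category.assoc, biprod.inl_desc, ht]
    rw [hf, ← Abelian.Ext.mk₀_comp_mk₀, Abelian.Ext.comp_assoc_of_second_deg_zero]
    erw [hse.comp_extClass]
    rw [Abelian.Ext.comp_zero]
  · have hs : Subsingleton (Abelian.Ext B N j) := hN B hB j hj (by omega)
    have : y = 0 := hs.elim _ _
    rw [this, Abelian.Ext.zero_comp]

theorem hlp_enoughInj [EnoughInjectives C] (X : Set C) (m : ℕ)
    (hX : X ∪ injSet ⊆ injIn (leftPerpLE X m))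
    (hpre : IsPreenvelopingIn (Set.univ : Set C) X) (N : C) (hN : N ∈ leftPerpLE X m) :
    ∃ (I B : C) (i : N ⟶ I) (p : I ⟶ B) (w : i ≫ p = 0),
        (ShortComplex.mk i p w).ShortExact ∧
        B ∈ leftPerpLE X m ∧ addClosure (X ∪ injSet) I := by
  obtain ⟨A, g, hA, hg⟩ := hpre N trivial
  let p : N ⟶ A ⊞ Injective.under N := biprod.lift g (Injective.ι N)
  have hp : Mono p := by
    have : Mono (p ≫ biprod.snd) := by
      rw [biprod.lift_snd]; infer_instance
    exact mono_of_mono p biprod.snd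
  have hse : (ShortComplex.mk p (cokernel.π p) (cokernel.condition p)).ShortExact :=
    { exact := ShortComplex.exact_of_g_is_cokernel _ (cokernelIsCokernel p) }
  have hadd : addClosure (X ∪ injSet) (A ⊞ Injective.under N) :=
    .biprod (.of (Or.inl hA)) (.of (Or.inr (Injective.injective_under N)))
  refine ⟨_, cokernel p, p, cokernel.π p, cokernel.condition p, hse, ?_, hadd⟩
  have hmem := (hlp_addInj X _ m hX hadd).1
  intro B hB i hi him
  refine hlp_sub fun x => ?_
  have := hmem B hB i hi him
  obtain ⟨j, rfl⟩ := Nat.exists_eq_add_of_le hi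
  obtain ⟨y, rfl⟩ := Abelian.Ext.contravariant_sequence_exact₃ hse B x
    (Subsingleton.elim (α := Abelian.Ext (A ⊞ Injective.under N) B (1 + j)) _ _) rfl
  rcases Nat.eq_zero_or_pos j with rfl | hj
  · obtain ⟨f, rfl⟩ := (Abelian.Ext.mk₀_bijective _ _).2 y
    obtain ⟨t, ht⟩ := hg B hB f
    have hf : f = p ≫ (biprod.fst ≫ t) := by
      simp only [p, biprod.lift_fst_assoc, ht]
    rw [hf, ← Abelian.Ext.mk₀_comp_mk₀]
    exact hse.extClass_comp_assoc _
  · have hs : Subsingleton (Abelian.Ext N B j) := hN B hB j hj (by omega)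
    have : y = 0 := hs.elim _ _
    rw [this, Abelian.Ext.comp_zero]

end Helpers

/-- Corollary 3.3: if `X` is `(n+2)`-rigid and functorially finite with
`X^{⊥_{≤ n+1}} = ^{⊥_{≤ n+1}}X`, then the reduction `R = X^{⊥_{≤ n+1}}` is an exact
category (it is closed under extensions) with enough projectives, given by
`add(X ∪ Proj C)`, and enough injectives, given by `add(X ∪ Inj C)`. -/
theorem stmt10 [EnoughProjectives C] [EnoughInjectives C] (X : Set C) (n : ℕ)
    (hrigid : IsRigidLE X (n + 1))
    (hprec : IsPrecoveringIn (Set.univ : Set C) X)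
    (hpreenv : IsPreenvelopingIn (Set.univ : Set C) X)
    (heq : rightPerpLE X (n + 1) = leftPerpLE X (n + 1)) :
    (∀ {A B Z : C} (f : A ⟶ B) (g : B ⟶ Z) (w : f ≫ g = 0),
      (ShortComplex.mk f g w).ShortExact → A ∈ rightPerpLE X (n + 1) →
        Z ∈ rightPerpLE X (n + 1) → B ∈ rightPerpLE X (n + 1)) ∧
    projIn (rightPerpLE X (n + 1)) = setOf (addClosure (X ∪ projSet)) ∧
    (∀ N ∈ rightPerpLE X (n + 1),
      ∃ (A P : C) (i : A ⟶ P) (p : P ⟶ N) (w : i ≫ p = 0),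
        (ShortComplex.mk i p w).ShortExact ∧
        A ∈ rightPerpLE X (n + 1) ∧ P ∈ projIn (rightPerpLE X (n + 1))) ∧
    injIn (rightPerpLE X (n + 1)) = setOf (addClosure (X ∪ injSet)) ∧
    (∀ N ∈ rightPerpLE X (n + 1),
      ∃ (I B : C) (i : N ⟶ I) (p : I ⟶ B) (w : i ≫ p = 0),
        (ShortComplex.mk i p w).ShortExact ∧
        B ∈ rightPerpLE X (n + 1) ∧ I ∈ injIn (rightPerpLE X (n + 1))) := by
  have hXR : X ⊆ rightPerpLE X (n + 1) := fun B hB A hA i h h' => hrigid A hA B hB i h h'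
  have hP : X ∪ projSet ⊆ projIn (rightPerpLE X (n + 1)) := by
    rintro P (hP | hP)
    · exact ⟨hXR hP, fun N hN => hN P hP 1 le_rfl (by omega)⟩
    · refine ⟨?_, fun N _ => hlp_proj hP N 1 le_rfl⟩
      rw [heq]
      exact fun A _ i hi _ => hlp_proj hP A i hi
  have hI : X ∪ injSet ⊆ injIn (leftPerpLE X (n + 1)) := by
    rintro P (hP | hP)
    · exact ⟨heq ▸ hXR hP, fun N hN => hN P hP 1 le_rfl (by omega)⟩
    · refine ⟨?_, fun N _ => hlp_inj hP N 1 le_rfl⟩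
      rw [← heq]
      exact fun A _ i hi _ => hlp_inj hP A i hi
  refine ⟨?_, ?_, ?_, ?_, ?_⟩
  · intro A B Z f g w hS hA hZ D hD i hi hi'
    exact hlp_cov2 hS D i (hA D hD i hi hi') (hZ D hD i hi hi')
  · ext P
    refine ⟨fun h => ?_, fun h => hlp_addProj X _ _ hP h⟩
    obtain ⟨A, Q, i, p, w, hS, hA, hQ⟩ := hlp_enoughProj X _ hP hprec P h.1
    have hs := h.2 A hA
    obtain ⟨y, hy⟩ := Abelian.Ext.covariant_sequence_exact₃ P hS (Abelian.Ext.mk₀ (𝟙 P)) rfl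
      (hs.elim _ _)
    obtain ⟨s, rfl⟩ := (Abelian.Ext.mk₀_bijective _ _).2 y
    rw [Abelian.Ext.mk₀_comp_mk₀] at hy
    exact .retract s p ((Abelian.Ext.mk₀_bijective _ _).1 hy) hQ
  · intro N hN
    obtain ⟨A, Q, i, p, w, hS, hA, hQ⟩ := hlp_enoughProj X _ hP hprec N hN
    exact ⟨A, Q, i, p, w, hS, hA, hlp_addProj X _ _ hP hQ⟩
  · rw [heq]
    ext P
    refine ⟨fun h => ?_, fun h => hlp_addInj X _ _ hI h⟩
    obtain ⟨Q, A, i, p, w, hS, hA, hQ⟩ := hlp_enoughInj X _ hI hpreenv P h.1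
    have hs := h.2 A hA
    obtain ⟨y, hy⟩ := Abelian.Ext.contravariant_sequence_exact₁ hS P (Abelian.Ext.mk₀ (𝟙 P)) rfl
      (hs.elim _ _)
    obtain ⟨s, rfl⟩ := (Abelian.Ext.mk₀_bijective _ _).2 y
    rw [Abelian.Ext.mk₀_comp_mk₀] at hy
    exact .retract i s ((Abelian.Ext.mk₀_bijective _ _).1 hy) hQ
  · rw [heq]
    intro N hN
    obtain ⟨Q, A, i, p, w, hS, hA, hQ⟩ := hlp_enoughInj X _ hI hpreenv N hN
    exact ⟨Q, A, i, p, w, hS, hA, hlp_addInj X _ _ hI hQ⟩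
end

section
/- Let C be an abelian category with enough projectives and injectives and X ⊆ C an (n+2)-rigid functorially finite subcategory with X^{⊥_{≤ n+1}} = ^{⊥_{≤ n+1}}X. If additionally X^{⊥_1} = ^{⊥_1}X, then X^{⊥_1} = X^{⊥_{≤ n+1}} = ^{⊥_1}X = ^{⊥_{≤ n+1}}X. -/
open CategoryTheory CategoryTheory.Limits CategoryTheory.Abelian

universe w v u

variable {C : Type u} [Category.{v} C] [Abelian C] [HasExt.{w} C]

/-- Any object of `X^{⊥_1}` embeds in an object of the form `I ⊞ A` with a cosyzygy in
`X^{⊥_1}` again. -/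
theorem step11 [EnoughInjectives C] (X : Set C) (n : ℕ)
    (hrigid : IsRigidLE X (n + 1))
    (hpreenv : IsPreenvelopingIn (Set.univ : Set C) X)
    (heq : rightPerpLE X (n + 1) = leftPerpLE X (n + 1))
    (h1 : rightPerpLE X 1 = leftPerpLE X 1) (N : C) :
    ∃ S : ShortComplex C, S.ShortExact ∧ S.X₁ = N ∧ S.X₃ ∈ rightPerpLE X 1 ∧
      ∀ B ∈ X, ∀ i : ℕ, 1 ≤ i → i ≤ n + 1 → Subsingleton (Abelian.Ext B S.X₂ i) := by
  obtain ⟨A, f, hA, hf⟩ := hpreenv N trivial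
  have hI : Injective.under N ∈ rightPerpLE X (n + 1) := by
    intro B _ i hi _
    obtain ⟨j, rfl⟩ : ∃ j, i = j + 1 := ⟨i - 1, by omega⟩
    exact Ext.subsingleton_of_injective _ _ _
  have hI' := hI
  rw [heq] at hI'
  let g : N ⟶ Injective.under N ⊞ A := biprod.lift (Injective.ι N) f
  have hg : Mono g := by
    have : Mono (g ≫ biprod.fst) := by
      simp only [g, biprod.lift_fst]; infer_instance
    exact mono_of_mono g biprod.fst
  let S : ShortComplex C := ShortComplex.mk g (cokernel.π g) (cokernel.condition g)
  have hS : S.ShortExact :=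
    { exact := ShortComplex.exact_cokernel g
      mono_f := hg
      epi_g := inferInstanceAs (Epi (cokernel.π g)) }
  refine ⟨S, hS, rfl, ?_, ?_⟩
  · rw [h1]
    intro B hB i hi hi'
    obtain rfl : i = 1 := by omega
    have hsub : Subsingleton (Ext S.X₂ B 1) := by
      have := hI' B hB 1 le_rfl (by omega)
      have := hrigid A hA B hB 1 le_rfl (by omega)
      exact (Ext.biprodAddEquiv (X₁ := Injective.under N) (X₂ := A) (Y := B)
        (n := 1)).toEquiv.subsingleton
    refine subsingleton_of_forall_eq 0 fun x => ?_
    obtain ⟨y, rfl⟩ := Ext.contravariant_sequence_exact₃ hS B x (Subsingleton.elim _ _)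
      (add_zero 1)
    obtain ⟨t, ht⟩ := hf B hB (Ext.homEquiv₀ y)
    have hy : y = (Ext.mk₀ S.f).comp (Ext.mk₀ (biprod.snd ≫ t)) (zero_add 0) := by
      rw [Ext.mk₀_comp_mk₀, ← Ext.mk₀_homEquiv₀_apply y, ← ht]
      congr 1
      simp [S, g]
    rw [hy]
    exact hS.extClass_comp_assoc _
  · intro B hB i hi hi'
    have := hI B hB i hi hi'
    have := hrigid B hB A hA i hi hi'
    exact (Ext.addEquivBiprod (X := B) (Y₁ := Injective.under N) (Y₂ := A)
      (n := i)).toEquiv.subsingleton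

/-- Lemma 3.6: under the standing hypotheses, if moreover `X^{⊥_1} = ^{⊥_1}X`, then
`X^{⊥_1} = X^{⊥_{≤ n+1}} = ^{⊥_1}X = ^{⊥_{≤ n+1}}X`. -/
theorem stmt11 [EnoughProjectives C] [EnoughInjectives C] (X : Set C) (n : ℕ)
    (hrigid : IsRigidLE X (n + 1))
    (hprec : IsPrecoveringIn (Set.univ : Set C) X)
    (hpreenv : IsPreenvelopingIn (Set.univ : Set C) X)
    (heq : rightPerpLE X (n + 1) = leftPerpLE X (n + 1))
    (h1 : rightPerpLE X 1 = leftPerpLE X 1) :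
    rightPerpLE X 1 = rightPerpLE X (n + 1) ∧
    rightPerpLE X 1 = leftPerpLE X 1 ∧
    leftPerpLE X 1 = leftPerpLE X (n + 1) := by
  have key : ∀ i : ℕ, i ≤ n → ∀ N ∈ rightPerpLE X 1, ∀ B ∈ X,
      Subsingleton (Abelian.Ext B N (i + 1)) := by
    intro i
    induction i with
    | zero => exact fun _ N hN B hB => hN B hB 1 le_rfl le_rfl
    | succ i ih =>
      intro hi N _ B hB
      obtain ⟨S, hS, rfl, h3, h2⟩ := step11 X n hrigid hpreenv heq h1 N
      have := ih (by omega) _ h3 B hB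
      have := h2 B hB (i + 1 + 1) (by omega) (by omega)
      refine subsingleton_of_forall_eq 0 fun x => ?_
      obtain ⟨y, rfl⟩ := Ext.covariant_sequence_exact₁ B hS x (Subsingleton.elim _ _) rfl
      rw [Subsingleton.elim y 0, Ext.zero_comp]
  have main : rightPerpLE X 1 = rightPerpLE X (n + 1) := by
    apply Set.Subset.antisymm
    · intro N hN B hB i hi hi'
      obtain ⟨j, rfl⟩ : ∃ j, i = j + 1 := ⟨i - 1, by omega⟩
      exact key j (by omega) N hN B hB
    · intro N hN B hB i hi hi'
      exact hN B hB i hi (by omega)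
  exact ⟨main, h1, by rw [← h1, main, heq]⟩
end

section
/- Let C be an abelian category with enough projectives and injectives and X ⊆ C an (n+2)-rigid functorially finite subcategory with X^{⊥_{≤ n+1}} = ^{⊥_{≤ n+1}}X. If 2 ≤ m ≤ n+1, 2m − n ≥ 1, and X^{⊥_{≤ m}} = ^{⊥_{≤ m}}X, then X^{⊥_{≤ m}} = X^{⊥_{≤ n+1}}. -/
open CategoryTheory CategoryTheory.Limits CategoryTheory.Abelian

universe w v u

variable {C : Type u} [Category.{v} C] [Abelian C] [HasExt.{w} C]

/-- Every object is the end term of a short exact sequence whose middle term lies in the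
orthogonal and through which all maps from `X` factor. -/
theorem exists_approx [EnoughProjectives C] (X : Set C) (n : ℕ)
    (hrigid : IsRigidLE X (n + 1))
    (hprec : IsPrecoveringIn (Set.univ : Set C) X) (N : C) :
    ∃ (K B : C) (f : K ⟶ B) (g : B ⟶ N) (w : f ≫ g = 0),
      (ShortComplex.mk f g w).ShortExact ∧ B ∈ leftPerpLE X (n + 1) ∧
      ∀ A ∈ X, ∀ h : A ⟶ N, ∃ t : A ⟶ B, t ≫ g = h := by
  obtain ⟨A, a, hA, ha⟩ := hprec N (Set.mem_univ N)
  have hepi : Epi (biprod.desc a (Projective.π N)) := by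
    have : Epi (biprod.inr ≫ biprod.desc a (Projective.π N)) := by
      rw [biprod.inr_desc]; infer_instance
    exact epi_of_epi biprod.inr _
  refine ⟨kernel (biprod.desc a (Projective.π N)), A ⊞ Projective.over N, kernel.ι _,
    biprod.desc a (Projective.π N), kernel.condition _, ?_, ?_, ?_⟩
  · exact { exact := ShortComplex.exact_of_f_is_kernel _ (kernelIsKernel _)
            mono_f := by dsimp; infer_instance
            epi_g := hepi }
  · intro A' hA' i hi1 hi2
    obtain ⟨j, rfl⟩ : ∃ j, i = j + 1 := ⟨i - 1, by omega⟩
    have h1 := hrigid A hA A' hA' (j + 1) hi1 hi2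
    have h2 := Ext.subsingleton_of_projective.{w} (Projective.over N) A' j
    exact ⟨fun x y => Ext.biprod_ext (Subsingleton.elim _ _) (Subsingleton.elim _ _)⟩
  · intro A' hA' h
    obtain ⟨t, ht⟩ := ha A' hA' h
    exact ⟨t ≫ biprod.inl, by simp [ht]⟩

/-- The kernel of an approximation gains one degree of right orthogonality. -/
theorem kernel_mem_rightPerp (X : Set C) (n j : ℕ) (S : ShortComplex C) (hS : S.ShortExact)
    (hB : S.X₂ ∈ rightPerpLE X n)
    (ht : ∀ A ∈ X, ∀ h : A ⟶ S.X₃, ∃ t : A ⟶ S.X₂, t ≫ S.g = h)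
    (hj : j + 1 ≤ n) (hN : S.X₃ ∈ rightPerpLE X j) : S.X₁ ∈ rightPerpLE X (j + 1) := by
  intro A hA i hi1 hi2
  refine subsingleton_of_forall_eq 0 fun x => ?_
  have hBi := hB A hA i hi1 (by omega)
  obtain ⟨k, rfl⟩ : ∃ k, i = k + 1 := ⟨i - 1, by omega⟩
  obtain ⟨y, rfl⟩ := Ext.covariant_sequence_exact₁ A hS x (Subsingleton.elim _ _) rfl
  rcases Nat.eq_zero_or_pos k with rfl | hk
  · obtain ⟨h, rfl⟩ := (Ext.mk₀_bijective _ _).2 y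
    obtain ⟨t, rfl⟩ := ht A hA h
    rw [← Ext.mk₀_comp_mk₀, Ext.comp_assoc_of_second_deg_zero, hS.comp_extClass, Ext.comp_zero]
  · have := hN A hA k hk (by omega)
    rw [Subsingleton.elim y 0, Ext.zero_comp]

/-- Dimension shifting for the left orthogonal. -/
theorem cokernel_mem_leftPerp (X : Set C) (n : ℕ) (S : ShortComplex C) (hS : S.ShortExact)
    (hB : S.X₂ ∈ leftPerpLE X n) (hK : S.X₁ ∈ leftPerpLE X n)
    (hN : S.X₃ ∈ leftPerpLE X 1) : S.X₃ ∈ leftPerpLE X n := by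
  intro A hA i hi1 hi2
  rcases Nat.lt_or_ge i 2 with hi | hi
  · exact hN A hA i hi1 (by omega)
  refine subsingleton_of_forall_eq 0 fun x => ?_
  have hBi := hB A hA i hi1 hi2
  obtain ⟨k, rfl⟩ : ∃ k, i = 1 + k := ⟨i - 1, by omega⟩
  obtain ⟨y, rfl⟩ := Ext.contravariant_sequence_exact₃ hS A x (Subsingleton.elim _ _) rfl
  have := hK A hA k (by omega) (by omega)
  rw [Subsingleton.elim y 0, Ext.comp_zero]

theorem rightPerpLE_anti (X : Set C) {i j : ℕ} (h : i ≤ j) :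
    rightPerpLE X j ⊆ rightPerpLE X i :=
  fun _ hN A hA k h1 h2 => hN A hA k h1 (h2.trans h)

/-- Proposition 3.8: under the standing hypotheses, if `2 ≤ m ≤ n+1`, `2m - n ≥ 1`, and
`X^{⊥_{≤ m}} = ^{⊥_{≤ m}}X`, then `X^{⊥_{≤ m}} = X^{⊥_{≤ n+1}}`. -/
theorem stmt13 [EnoughProjectives C] [EnoughInjectives C] (X : Set C) (n m : ℕ)
    (hrigid : IsRigidLE X (n + 1))
    (hprec : IsPrecoveringIn (Set.univ : Set C) X)
    (hpreenv : IsPreenvelopingIn (Set.univ : Set C) X)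
    (heq : rightPerpLE X (n + 1) = leftPerpLE X (n + 1))
    (hm1 : 2 ≤ m) (hm2 : m ≤ n + 1) (hmn : n + 1 ≤ 2 * m)
    (heqm : rightPerpLE X m = leftPerpLE X m) :
    rightPerpLE X m = rightPerpLE X (n + 1) := by
  refine Set.Subset.antisymm ?_ (rightPerpLE_anti X hm2)
  have key : ∀ k : ℕ, ∀ N ∈ rightPerpLE X m, N ∈ rightPerpLE X (n + 1 - k) →
      N ∈ rightPerpLE X (n + 1) := by
    intro k
    induction k with
    | zero => intro N _ h; exact h
    | succ k ih =>
      intro N hN hNk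
      obtain ⟨K, B, f, g, w, hS, hB, ht⟩ := exists_approx X n hrigid hprec N
      have hB' : B ∈ rightPerpLE X (n + 1) := heq ▸ hB
      have hK1 : K ∈ rightPerpLE X m := by
        have := kernel_mem_rightPerp X (n + 1) (m - 1) _ hS hB' ht (by omega)
          (rightPerpLE_anti X (by omega) hN)
        exact rightPerpLE_anti X (by omega) this
      have hK2 : K ∈ rightPerpLE X (n + 1 - k) := by
        rcases Nat.lt_or_ge k (n + 1) with hk | hk
        · have := kernel_mem_rightPerp X (n + 1) (n + 1 - (k + 1)) _ hS hB' ht (by omega) hNk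
          exact rightPerpLE_anti X (by omega) this
        · exact rightPerpLE_anti X (by omega) hK1
      have hK : K ∈ leftPerpLE X (n + 1) := heq ▸ ih K hK1 hK2
      have hN1 : N ∈ leftPerpLE X m := heqm ▸ hN
      rw [heq]
      exact cokernel_mem_leftPerp X (n + 1) _ hS hB hK
        (fun A hA i h1 h2 => hN1 A hA i h1 (by omega))
  intro N hN
  exact key (n + 1) N hN (rightPerpLE_anti X (by omega) hN)
end

section
/- Let C be an abelian category with enough projectives and injectives and X ⊆ C an (n+2)-rigid functorially finite subcategory with X^{⊥_{≤ n+1}} = ^{⊥_{≤ n+1}}X. Write R = X^{⊥_{≤ n+1}}, viewed as an exact category with the inherited exact structure. Then for all M, N ∈ R and all 1 ≤ i ≤ n+1, the i-th extension group computed in the exact category R is naturally isomorphic to Ext^i_C(M, N). -/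
open CategoryTheory CategoryTheory.Limits CategoryTheory.Abelian

universe w v u

variable {C : Type u} [Category.{v} C] [Abelian C] [HasExt.{w} C]

lemma subsing_ext_proj (P Y : C) [Projective P] (k : ℕ) (hk : 1 ≤ k) :
    Subsingleton (Abelian.Ext P Y k) := by
  obtain ⟨m, rfl⟩ : ∃ m, k = m + 1 := ⟨k - 1, by omega⟩
  exact Abelian.Ext.subsingleton_of_projective P Y m

/-- Objects projective in `R` have no higher extensions into `R` up to degree `n + 1`. -/
lemma projIn_vanish [EnoughProjectives C] (X : Set C) (n : ℕ)
    (hrigid : IsRigidLE X (n + 1))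
    (hprec : IsPrecoveringIn (Set.univ : Set C) X)
    (heq : rightPerpLE X (n + 1) = leftPerpLE X (n + 1))
    (P N : C) (hP : P ∈ projIn (rightPerpLE X (n + 1))) (hN : N ∈ rightPerpLE X (n + 1))
    (k : ℕ) (hk1 : 1 ≤ k) (hk2 : k ≤ n + 1) :
    Subsingleton (Abelian.Ext P N k) := by
  obtain ⟨hPR, hPproj⟩ := hP
  obtain ⟨A, a, hA, hlift⟩ := hprec P (Set.mem_univ _)
  let Q := Projective.over P
  let q : Q ⟶ P := Projective.π P
  let g : A ⊞ Q ⟶ P := biprod.desc a q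
  have hg : Epi g := by
    have h : biprod.inr ≫ g = q := biprod.inr_desc _ _
    have : Epi (biprod.inr ≫ g) := by rw [h]; infer_instance
    exact epi_of_epi biprod.inr g
  have hQR : Q ∈ rightPerpLE X (n + 1) := by
    rw [heq]
    intro B _ j hj _
    exact subsing_ext_proj Q B j hj
  let S : ShortComplex C := ShortComplex.mk (kernel.ι g) g (kernel.condition g)
  have hS : S.ShortExact :=
    { exact := ShortComplex.exact_of_f_is_kernel _ (kernelIsKernel g)
      mono_f := inferInstanceAs (Mono (kernel.ι g))
      epi_g := hg }
  have hmid : ∀ B ∈ X, ∀ j, 1 ≤ j → j ≤ n + 1 → Subsingleton (Abelian.Ext B (A ⊞ Q) j) := by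
    intro B hB j h1 h2
    have := hrigid B hB A hA j h1 h2
    have := hQR B hB j h1 h2
    exact Ext.addEquivBiprod.toEquiv.subsingleton
  have hK : S.X₁ ∈ rightPerpLE X (n + 1) := by
    intro B hB j h1 h2
    refine subsingleton_of_forall_eq 0 fun x => ?_
    have hx : x.comp (Ext.mk₀ S.f) (add_zero j) = 0 := (hmid B hB j h1 h2).elim _ _
    obtain ⟨m, rfl⟩ : ∃ m, j = m + 1 := ⟨j - 1, by omega⟩
    obtain ⟨y, hy⟩ := Ext.covariant_sequence_exact₁ B hS x hx rfl
    rw [← hy]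
    have hy2 : ∃ z : Abelian.Ext B S.X₂ m, z.comp (Ext.mk₀ S.g) (add_zero m) = y := by
      rcases Nat.eq_zero_or_pos m with rfl | hm
      · obtain ⟨y, rfl⟩ := (Ext.mk₀_bijective B S.X₃).2 y
        obtain ⟨t, ht⟩ := hlift B hB y
        refine ⟨Ext.mk₀ (t ≫ biprod.inl), ?_⟩
        rw [Ext.mk₀_comp_mk₀]
        congr 1
        simp [S, g, ht]
      · exact ⟨0, (hPR B hB m hm (by omega)).elim _ _⟩
    obtain ⟨z, rfl⟩ := hy2
    rw [Ext.comp_assoc_of_second_deg_zero, hS.comp_extClass, Ext.comp_zero]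
  obtain ⟨s, hs⟩ := Ext.covariant_sequence_exact₃ P hS (Ext.mk₀ (𝟙 P)) (n₁ := 1) rfl
    ((hPproj _ hK).elim _ _)
  obtain ⟨s, rfl⟩ := (Ext.mk₀_bijective P S.X₂).2 s
  have hmid2 : Subsingleton (Abelian.Ext (A ⊞ Q) N k) := by
    have := hN A hA k hk1 hk2
    have := subsing_ext_proj Q N k hk1
    exact Ext.biprodAddEquiv.toEquiv.subsingleton
  refine subsingleton_of_forall_eq 0 fun x => ?_
  have h0 : (Ext.mk₀ S.g).comp x (zero_add k) = 0 := hmid2.elim _ _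
  have h1 : (Ext.mk₀ s).comp ((Ext.mk₀ S.g).comp x (zero_add k)) (zero_add k) = x := by
    rw [Ext.mk₀_comp_mk₀] at hs
    rw [Ext.mk₀_comp_mk₀_assoc, hs, Ext.mk₀_id_comp]
  rw [← h1, h0, Ext.comp_zero]

/-- Dimension shifting. -/
lemma ext_shift {S : ShortComplex C} (hS : S.ShortExact) (N : C) (k l : ℕ) (hl : 1 + k = l)
    (h1 : Subsingleton (Abelian.Ext S.X₂ N k)) (h2 : Subsingleton (Abelian.Ext S.X₂ N l)) :
    Nonempty (Abelian.Ext S.X₁ N k ≃+ Abelian.Ext S.X₃ N l) := by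
  refine ⟨AddEquiv.ofBijective (hS.extClass.precomp N hl) ⟨?_, ?_⟩⟩
  · rw [injective_iff_map_eq_zero]
    intro x hx
    obtain ⟨y, rfl⟩ := Ext.contravariant_sequence_exact₁ hS N x hl hx
    rw [h1.elim y 0, Ext.comp_zero]
  · intro x
    exact Ext.contravariant_sequence_exact₃ hS N x (h2.elim _ _) hl

/-- Proposition 4.5: with `R = X^{⊥_{≤ n+1}}` the reduction of `C` at `X`, for all
`M, N ∈ R` and `1 ≤ i ≤ n+1`, the `i`-th extension group in the exact category `R`,
computed as `Ext^1(Ω_R^{i-1} M, N)` via any chain of syzygy conflations in `R` with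
projective-in-`R` middle terms, is isomorphic to `Ext^i_C(M, N)`. -/
theorem stmt15 [EnoughProjectives C] [EnoughInjectives C] (X : Set C) (n : ℕ)
    (hrigid : IsRigidLE X (n + 1))
    (hprec : IsPrecoveringIn (Set.univ : Set C) X)
    (hpreenv : IsPreenvelopingIn (Set.univ : Set C) X)
    (heq : rightPerpLE X (n + 1) = leftPerpLE X (n + 1))
    (M N : C) (hM : M ∈ rightPerpLE X (n + 1)) (hN : N ∈ rightPerpLE X (n + 1))
    (i : ℕ) (hi1 : 1 ≤ i) (hi2 : i ≤ n + 1)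
    (Ms : ℕ → C) (hMs0 : Ms 0 = M)
    (hMsR : ∀ j ≤ i - 1, Ms j ∈ rightPerpLE X (n + 1))
    (hsyz : ∀ j < i - 1,
      ∃ P ∈ projIn (rightPerpLE X (n + 1)),
        ∃ (f : Ms (j + 1) ⟶ P) (g : P ⟶ Ms j) (w : f ≫ g = 0),
          (ShortComplex.mk f g w).ShortExact) :
    Nonempty (Abelian.Ext (Ms (i - 1)) N 1 ≃+ Abelian.Ext M N i) := by
  have key : ∀ t, t ≤ i - 1 →
      Nonempty (Abelian.Ext (Ms (i - 1)) N 1 ≃+ Abelian.Ext (Ms (i - 1 - t)) N (1 + t)) := by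
    intro t
    induction t with
    | zero => exact fun _ => ⟨AddEquiv.refl _⟩
    | succ t ih =>
      intro ht
      obtain ⟨e⟩ := ih (by omega)
      obtain ⟨P, hP, f, g, w, hS⟩ := hsyz (i - 1 - (t + 1)) (by omega)
      have hidx : i - 1 - (t + 1) + 1 = i - 1 - t := by omega
      obtain ⟨e'⟩ := ext_shift hS N (1 + t) (1 + (t + 1)) (by omega)
        (projIn_vanish X n hrigid hprec heq P N hP hN _ (by omega) (by omega))
        (projIn_vanish X n hrigid hprec heq P N hP hN _ (by omega) (by omega))
      dsimp only at e'
      rw [← hidx] at e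
      exact ⟨e.trans e'⟩
  obtain ⟨e⟩ := key (i - 1) le_rfl
  rw [Nat.sub_self, hMs0, show 1 + (i - 1) = i by omega] at e
  exact ⟨e⟩
end

section
/- Let C be an abelian category with enough projectives and injectives, X ⊆ C an (n+2)-rigid functorially finite subcategory with X^{⊥_{≤ n+1}} = ^{⊥_{≤ n+1}}X, and R = X^{⊥_{≤ n+1}}. Then R is a Frobenius exact category (projective and injective objects of R coincide) if and only if Inj(C) ⊆ add(X ∪ Proj(C)) and Proj(C) ⊆ add(X ∪ Inj(C)); and in that case Proj(R) = add(X ∪ Proj(C)) = add(X ∪ Inj(C)) = Inj(R). -/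
open CategoryTheory CategoryTheory.Limits CategoryTheory.Abelian

universe w v u

variable {C : Type u} [Category.{v} C] [Abelian C] [HasExt.{w} C]

/-- `R` (an extension-closed subcategory with its inherited exact structure) is Frobenius:
it has enough projectives and enough injectives and these coincide. -/
def IsFrobeniusIn (R : Set C) : Prop :=
  (∀ N ∈ R, ∃ (A P : C) (i : A ⟶ P) (p : P ⟶ N) (w : i ≫ p = 0),
      (ShortComplex.mk i p w).ShortExact ∧ A ∈ R ∧ P ∈ projIn R) ∧
  (∀ N ∈ R, ∃ (I B : C) (i : N ⟶ I) (p : I ⟶ B) (w : i ≫ p = 0),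
      (ShortComplex.mk i p w).ShortExact ∧ B ∈ R ∧ I ∈ injIn R) ∧
  projIn R = injIn R


namespace Stmt19

lemma sub_left {A B N : C} {k : ℕ} (i : A ⟶ B) (r : B ⟶ A) (hir : i ≫ r = 𝟙 A)
    (h : Subsingleton (Ext B N k)) : Subsingleton (Ext A N k) := by
  refine subsingleton_of_forall_eq 0 fun x => ?_
  rw [← Ext.mk₀_id_comp x, ← hir, ← Ext.mk₀_comp_mk₀_assoc,
    Subsingleton.elim ((Ext.mk₀ r).comp x (zero_add k)) 0, Ext.comp_zero]

lemma sub_right {A B N : C} {k : ℕ} (i : A ⟶ B) (r : B ⟶ A) (hir : i ≫ r = 𝟙 A)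
    (h : Subsingleton (Ext N B k)) : Subsingleton (Ext N A k) := by
  refine subsingleton_of_forall_eq 0 fun x => ?_
  rw [← Ext.comp_mk₀_id x, ← hir, ← Ext.mk₀_comp_mk₀, ← Ext.comp_assoc_of_third_deg_zero,
    Subsingleton.elim (x.comp (Ext.mk₀ i) (add_zero k)) 0, Ext.zero_comp]

lemma sub_biprod_left {A B N : C} {k : ℕ} (h : Subsingleton (Ext A N k))
    (h' : Subsingleton (Ext B N k)) : Subsingleton (Ext (A ⊞ B) N k) :=
  Ext.biprodAddEquiv.toEquiv.subsingleton

lemma sub_biprod_right {A B N : C} {k : ℕ} (h : Subsingleton (Ext N A k))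
    (h' : Subsingleton (Ext N B k)) : Subsingleton (Ext N (A ⊞ B) k) :=
  Ext.addEquivBiprod.toEquiv.subsingleton

lemma sub_proj {P N : C} (hP : Projective P) {k : ℕ} (hk : 1 ≤ k) :
    Subsingleton (Ext P N k) := by
  obtain ⟨k, rfl⟩ := Nat.exists_eq_add_of_le' hk
  exact Ext.subsingleton_of_projective P N k

lemma sub_inj {I N : C} (hI : Injective I) {k : ℕ} (hk : 1 ≤ k) :
    Subsingleton (Ext N I k) := by
  obtain ⟨k, rfl⟩ := Nat.exists_eq_add_of_le' hk
  exact Ext.subsingleton_of_injective N I k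

lemma zero_proj {O : C} (h : IsZero O) : Projective O :=
  ⟨fun _ _ _ => ⟨0, h.eq_of_src _ _⟩⟩

lemma zero_inj {O : C} (h : IsZero O) : Injective O :=
  ⟨fun _ _ _ => ⟨0, h.eq_of_tgt _ _⟩⟩

lemma add_min {S : Set C} {T : Set C} (h : S ⊆ setOf (addClosure T)) :
    setOf (addClosure S) ⊆ setOf (addClosure T) := by
  intro A hA
  induction hA with
  | of h' => exact h h'
  | zero O h' => exact .zero O h'
  | biprod _ _ h1 h2 => exact .biprod h1 h2
  | retract i r hir _ h1 => exact .retract i r hir h1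

section
variable {X : Set C} {n : ℕ}

lemma add_le_proj (hrigid : IsRigidLE X (n + 1))
    (heq : rightPerpLE X (n + 1) = leftPerpLE X (n + 1)) :
    setOf (addClosure (X ∪ projSet)) ⊆ projIn (rightPerpLE X (n + 1)) := by
  have hp : ∀ P : C, Projective P → P ∈ projIn (rightPerpLE X (n + 1)) := fun P hP =>
    ⟨by rw [heq]; exact fun A _ i hi _ => sub_proj hP hi, fun N _ => sub_proj hP le_rfl⟩
  intro A hA
  induction hA with
  | of h =>
    rcases h with h | h
    · exact ⟨fun B hB i h1 h2 => hrigid B hB _ h i h1 h2,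
        fun N hN => hN _ h 1 le_rfl (by omega)⟩
    · exact hp _ h
  | zero O h => exact hp _ (zero_proj h)
  | biprod _ _ h1 h2 =>
    exact ⟨fun B hB i hi hi' => sub_biprod_right (h1.1 B hB i hi hi') (h2.1 B hB i hi hi'),
      fun N hN => sub_biprod_left (h1.2 N hN) (h2.2 N hN)⟩
  | retract i r hir _ h1 =>
    exact ⟨fun B hB k hi hi' => sub_right i r hir (h1.1 B hB k hi hi'),
      fun N hN => sub_left i r hir (h1.2 N hN)⟩

lemma add_le_inj (hrigid : IsRigidLE X (n + 1))
    (heq : rightPerpLE X (n + 1) = leftPerpLE X (n + 1)) :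
    setOf (addClosure (X ∪ injSet)) ⊆ injIn (rightPerpLE X (n + 1)) := by
  have hp : ∀ P : C, Injective P → P ∈ injIn (rightPerpLE X (n + 1)) := fun P hP =>
    ⟨fun A _ i hi _ => sub_inj hP hi, fun N _ => sub_inj hP le_rfl⟩
  intro A hA
  induction hA with
  | of h =>
    rcases h with h | h
    · exact ⟨fun B hB i h1 h2 => hrigid B hB _ h i h1 h2,
        fun N hN => (heq ▸ hN : N ∈ leftPerpLE X (n + 1)) _ h 1 le_rfl (by omega)⟩
    · exact hp _ h
  | zero O h => exact hp _ (zero_inj h)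
  | biprod _ _ h1 h2 =>
    exact ⟨fun B hB i hi hi' => sub_biprod_right (h1.1 B hB i hi hi') (h2.1 B hB i hi hi'),
      fun N hN => sub_biprod_right (h1.2 N hN) (h2.2 N hN)⟩
  | retract i r hir _ h1 =>
    exact ⟨fun B hB k hi hi' => sub_right i r hir (h1.1 B hB k hi hi'),
      fun N hN => sub_right i r hir (h1.2 N hN)⟩

lemma enough_proj [EnoughProjectives C] (hrigid : IsRigidLE X (n + 1))
    (hprec : IsPrecoveringIn (Set.univ : Set C) X)
    (heq : rightPerpLE X (n + 1) = leftPerpLE X (n + 1)) (N : C)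
    (hN : N ∈ rightPerpLE X (n + 1)) :
    ∃ (A P : C) (i : A ⟶ P) (p : P ⟶ N) (w : i ≫ p = 0),
      (ShortComplex.mk i p w).ShortExact ∧ A ∈ rightPerpLE X (n + 1) ∧
        addClosure (X ∪ projSet) P := by
  obtain ⟨A, g, hA, hg⟩ := hprec N trivial
  let p : A ⊞ Projective.over N ⟶ N := biprod.desc g (Projective.π N)
  have hadd : addClosure (X ∪ projSet) (A ⊞ Projective.over N) :=
    .biprod (.of (Or.inl hA)) (.of (Or.inr (inferInstanceAs (Projective (Projective.over N)))))
  have hS : (ShortComplex.mk (kernel.ι p) p (kernel.condition p)).ShortExact :=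
    { exact := ShortComplex.exact_of_f_is_kernel _ (kernelIsKernel p)
      mono_f := inferInstanceAs (Mono (kernel.ι p))
      epi_g := inferInstanceAs (Epi (biprod.desc g (Projective.π N))) }
  refine ⟨_, _, _, p, kernel.condition p, hS, ?_, hadd⟩
  intro B hB i hi hi'
  refine subsingleton_of_forall_eq 0 fun x => ?_
  obtain ⟨k, rfl⟩ := Nat.exists_eq_add_of_le' hi
  have hs := (add_le_proj hrigid heq hadd).1 B hB (k + 1) hi hi'
  obtain ⟨y, rfl⟩ := Ext.covariant_sequence_exact₁ B hS x (hs.elim _ _) rfl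
  rcases Nat.eq_zero_or_pos k with rfl | hk
  · obtain ⟨f, rfl⟩ := (Ext.mk₀_bijective _ _).2 y
    obtain ⟨t, ht⟩ := hg B hB f
    have : f = (t ≫ biprod.inl) ≫ p := by simp [p, ht]
    dsimp only at f
    rw [this, ← Ext.mk₀_comp_mk₀, Ext.comp_assoc_of_second_deg_zero]
    erw [hS.comp_extClass]
    rw [Ext.comp_zero]
  · rw [(hN B hB k hk (by omega)).elim y 0, Ext.zero_comp]

lemma enough_inj [EnoughInjectives C] (hrigid : IsRigidLE X (n + 1))
    (hpreenv : IsPreenvelopingIn (Set.univ : Set C) X)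
    (heq : rightPerpLE X (n + 1) = leftPerpLE X (n + 1)) (N : C)
    (hN : N ∈ rightPerpLE X (n + 1)) :
    ∃ (I B : C) (i : N ⟶ I) (p : I ⟶ B) (w : i ≫ p = 0),
      (ShortComplex.mk i p w).ShortExact ∧ B ∈ rightPerpLE X (n + 1) ∧
        addClosure (X ∪ injSet) I := by
  obtain ⟨A, g, hA, hg⟩ := hpreenv N trivial
  let p : N ⟶ A ⊞ Injective.under N := biprod.lift g (Injective.ι N)
  have hadd : addClosure (X ∪ injSet) (A ⊞ Injective.under N) :=
    .biprod (.of (Or.inl hA)) (.of (Or.inr (inferInstanceAs (Injective (Injective.under N)))))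
  have hS : (ShortComplex.mk p (cokernel.π p) (cokernel.condition p)).ShortExact :=
    { exact := ShortComplex.exact_of_g_is_cokernel _ (cokernelIsCokernel p)
      mono_f := inferInstanceAs (Mono (biprod.lift g (Injective.ι N)))
      epi_g := inferInstanceAs (Epi (cokernel.π p)) }
  refine ⟨_, _, p, _, cokernel.condition p, hS, ?_, hadd⟩
  have hI := (add_le_inj hrigid heq hadd).1
  rw [heq] at hN hI ⊢
  intro B hB i hi hi'
  refine subsingleton_of_forall_eq 0 fun x => ?_
  obtain ⟨k, rfl⟩ := Nat.exists_eq_add_of_le' hi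
  have hs := hI B hB (k + 1) hi hi'
  obtain ⟨y, rfl⟩ := Ext.contravariant_sequence_exact₃ hS B x (hs.elim _ _) (add_comm 1 k)
  rcases Nat.eq_zero_or_pos k with rfl | hk
  · obtain ⟨f, rfl⟩ := (Ext.mk₀_bijective _ _).2 y
    obtain ⟨t, ht⟩ := hg B hB f
    have : f = p ≫ (biprod.fst ≫ t) := by simp [p, ht]
    dsimp only at f
    rw [this, ← Ext.mk₀_comp_mk₀, ← Ext.comp_assoc_of_second_deg_zero]
    erw [hS.extClass_comp]
    rw [Ext.zero_comp]
  · rw [(hN B hB k hk (by omega)).elim y 0, Ext.comp_zero]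

lemma proj_eq [EnoughProjectives C] (hrigid : IsRigidLE X (n + 1))
    (hprec : IsPrecoveringIn (Set.univ : Set C) X)
    (heq : rightPerpLE X (n + 1) = leftPerpLE X (n + 1)) :
    projIn (rightPerpLE X (n + 1)) = setOf (addClosure (X ∪ projSet)) := by
  refine subset_antisymm ?_ (add_le_proj hrigid heq)
  rintro N ⟨hN, hN'⟩
  obtain ⟨A, P, i, p, w, hS, hA, hP⟩ := enough_proj hrigid hprec heq N hN
  obtain ⟨y, hy⟩ := Ext.covariant_sequence_exact₃ N hS (Ext.mk₀ (𝟙 N)) (zero_add 1)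
    ((hN' A hA).elim _ _)
  obtain ⟨s, rfl⟩ := (Ext.mk₀_bijective _ _).2 y
  rw [Ext.mk₀_comp_mk₀] at hy
  exact .retract s p ((Ext.mk₀_bijective _ _).1 hy) hP

lemma inj_eq [EnoughInjectives C] (hrigid : IsRigidLE X (n + 1))
    (hpreenv : IsPreenvelopingIn (Set.univ : Set C) X)
    (heq : rightPerpLE X (n + 1) = leftPerpLE X (n + 1)) :
    injIn (rightPerpLE X (n + 1)) = setOf (addClosure (X ∪ injSet)) := by
  refine subset_antisymm ?_ (add_le_inj hrigid heq)
  rintro N ⟨hN, hN'⟩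
  obtain ⟨I, B, i, p, w, hS, hB, hI⟩ := enough_inj hrigid hpreenv heq N hN
  obtain ⟨y, hy⟩ := Ext.contravariant_sequence_exact₁ hS N (Ext.mk₀ (𝟙 N)) (add_zero 1)
    ((hN' B hB).elim _ _)
  obtain ⟨s, rfl⟩ := (Ext.mk₀_bijective _ _).2 y
  rw [Ext.mk₀_comp_mk₀] at hy
  exact .retract i s ((Ext.mk₀_bijective _ _).1 hy) hI

end

end Stmt19

/-- Corollary 3.10: the reduction `R = X^{⊥_{≤ n+1}}` is a Frobenius exact category if
and only if `Inj(C) ⊆ add(X ∪ Proj C)` and `Proj(C) ⊆ add(X ∪ Inj C)`; and in that case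
`Proj(R) = add(X ∪ Proj C) = add(X ∪ Inj C) = Inj(R)`. -/
theorem stmt19 [EnoughProjectives C] [EnoughInjectives C] (X : Set C) (n : ℕ)
    (hrigid : IsRigidLE X (n + 1))
    (hprec : IsPrecoveringIn (Set.univ : Set C) X)
    (hpreenv : IsPreenvelopingIn (Set.univ : Set C) X)
    (heq : rightPerpLE X (n + 1) = leftPerpLE X (n + 1)) :
    (IsFrobeniusIn (rightPerpLE X (n + 1)) ↔
      (injSet ⊆ setOf (addClosure (X ∪ projSet)) ∧
       projSet ⊆ setOf (addClosure (X ∪ injSet)))) ∧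
    (IsFrobeniusIn (rightPerpLE X (n + 1)) →
      projIn (rightPerpLE X (n + 1)) = setOf (addClosure (X ∪ projSet)) ∧
      setOf (addClosure (X ∪ projSet)) = setOf (addClosure (X ∪ injSet)) ∧
      setOf (addClosure (X ∪ injSet)) = injIn (rightPerpLE X (n + 1))) := by
  have hP := Stmt19.proj_eq hrigid hprec heq
  have hI := Stmt19.inj_eq hrigid hpreenv heq
  refine ⟨⟨fun h => ?_, fun h => ⟨fun N hN => ?_, fun N hN => ?_, ?_⟩⟩, fun h => ?_⟩
  · have h2 := h.2.2
    rw [hP, hI] at h2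
    exact ⟨fun I hI => h2 ▸ .of (Or.inr hI), fun P hP => h2 ▸ .of (Or.inr hP)⟩
  · rw [hP]
    exact Stmt19.enough_proj hrigid hprec heq N hN
  · rw [hI]
    exact Stmt19.enough_inj hrigid hpreenv heq N hN
  · rw [hP, hI]
    refine subset_antisymm (Stmt19.add_min ?_) (Stmt19.add_min ?_)
    · exact Set.union_subset (fun A hA => .of (Or.inl hA)) h.2
    · exact Set.union_subset (fun A hA => .of (Or.inl hA)) h.1
  · exact ⟨hP, by rw [← hP, ← hI]; exact h.2.2, hI.symm⟩
end
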